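/- Let A be a unital C*-algebra and for positive a, b ∈ A define d_W(a,b) = inf { r > 0 : for all t > 0, (a − t − r)_+ ≾ (b − t)_+ and (b − t − r)_+ ≾ (a − t)_+ }, where ≾ denotes Cuntz subequivalence. Then for all positive a, b ∈ A, d_W(a,b) ≤ d_U(a,b) ≤ ‖a − b‖, where d_U(a,b) = inf over unitaries u of ‖u a u* − b‖. -/

import Mathlib

open Filter Topology

/-- The distance between unitary orbits. -/
noncomputable def dU {A : Type*} [CStarAlgebra A] (a b : A) : ℝ :=
  sInf {r : ℝ | ∃ u ∈ unitary A, r = ‖u * a * star u - b‖}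

/-- `cut t a = (a - t)₊`, the positive part of `a - t·1`. -/
noncomputable def cut {A : Type*} [CStarAlgebra A] (t : ℝ) (a : A) : A :=
  cfc (fun x : ℝ => max (x - t) 0) a

/-- Cuntz subequivalence (within the algebra). -/
def CuntzLE {A : Type*} [CStarAlgebra A] (a b : A) : Prop :=
  ∃ v : ℕ → A, Tendsto (fun k => ‖a - v k * b * star (v k)‖) atTop (𝓝 0)

/-- The Cuntz pseudometric `d_W`. -/
noncomputable def dW {A : Type*} [CStarAlgebra A] (a b : A) : ℝ :=
  sInf {r : ℝ | 0 < r ∧ ∀ t : ℝ, 0 < t →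
    CuntzLE (cut (t + r) a) (cut t b) ∧ CuntzLE (cut (t + r) b) (cut t a)}

/-!
If `v v* = 1` and `‖a - v b v*‖ ≤ r`, then `x := a - (t + r)` satisfies
`x ≤ v (b - t) v* ≤ v (b - t)₊ v*`. An order relation `x ≤ c` with `x` self-adjoint already gives
`x₊ ≾ c`: compressing by `x₊` turns it into `x₊³ = x₊ x x₊ ≤ x₊ c x₊`, while `x₊ ≾ x₊³` and
`0 ≤ p ≤ q` implies `p ≾ q`. Hence `(a - t - r)₊ ≾ v (b - t)₊ v* ≾ (b - t)₊`. For a unitary `u`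
with `‖u a u* - b‖ ≤ r` this applies to `v = u*` and, with `a` and `b` exchanged, to `v = u`.
-/

section CuntzLE

variable {A : Type*} [CStarAlgebra A] {a b c : A}

theorem cuntzLE_iff_mem_closure_range :
    CuntzLE a b ↔ a ∈ closure (Set.range fun v : A ↦ v * b * star v) := by
  rw [mem_closure_iff_seq_limit]
  constructor
  · rintro ⟨v, hv⟩
    refine ⟨fun n ↦ v n * b * star (v n), fun n ↦ Set.mem_range_self (v n), ?_⟩
    rw [tendsto_iff_norm_sub_tendsto_zero]
    simpa only [norm_sub_rev a] using hv
  · rintro ⟨x, hx, hlim⟩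
    choose v hv using hx
    refine ⟨v, ?_⟩
    simpa only [hv, norm_sub_rev a] using tendsto_iff_norm_sub_tendsto_zero.1 hlim

theorem cuntzLE_of_forall_pos_exists_norm_sub_le
    (h : ∀ ε : ℝ, 0 < ε → ∃ v : A, ‖a - v * b * star v‖ ≤ ε) : CuntzLE a b := by
  rw [cuntzLE_iff_mem_closure_range, Metric.mem_closure_range_iff]
  intro ε hε
  obtain ⟨v, hv⟩ := h (ε / 2) (half_pos hε)
  exact ⟨v, by rw [dist_eq_norm]; linarith⟩

theorem cuntzLE_conj (v b : A) : CuntzLE (v * b * star v) b :=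
  cuntzLE_iff_mem_closure_range.2 (subset_closure (Set.mem_range_self v))

theorem CuntzLE.trans (hab : CuntzLE a b) (hbc : CuntzLE b c) : CuntzLE a c := by
  simp only [cuntzLE_iff_mem_closure_range] at hab hbc ⊢
  refine closure_minimal (Set.range_subset_iff.2 fun v ↦ ?_) isClosed_closure hab
  refine map_mem_closure (f := fun x ↦ v * x * star v) (by fun_prop) hbc ?_
  rintro _ ⟨w, rfl⟩
  exact ⟨v * w, by simp only [star_mul, mul_assoc]⟩

variable [PartialOrder A] [StarOrderedRing A]

-- With `w = (b + ε)^(-1/2)` and `v = a^(1/2) w`, one has `a - v b v* = ε v v*`, and `a ≤ b + ε`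
-- says exactly that `‖v‖ ≤ 1`.
theorem cuntzLE_of_le (ha : 0 ≤ a) (hab : a ≤ b) : CuntzLE a b := by
  refine cuntzLE_of_forall_pos_exists_norm_sub_le fun ε hε ↦ ?_
  set d : A := b + algebraMap ℝ A ε with hd
  have hε_pos : IsStrictlyPositive (algebraMap ℝ A ε) := isStrictlyPositive_algebraMap hε
  have hd_pos : IsStrictlyPositive d := hε_pos.nonneg_add (ha.trans hab)
  have had : a ≤ d := le_add_of_le_of_nonneg hab hε_pos.nonneg
  set w : A := d ^ (-(1 / 2) : ℝ)
  have hw : star w = w := (IsSelfAdjoint.of_nonneg CFC.rpow_nonneg).star_eq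
  set h : A := CFC.sqrt a
  have hh : star h = h := (IsSelfAdjoint.of_nonneg (CFC.sqrt_nonneg a)).star_eq
  have hv : ‖h * w‖ ≤ 1 := (le_iff_norm_sqrt_mul_rpow a d).1 had
  have hwbw : w * b * w = 1 - ε • (w * w) := by
    have hb : b = d - ε • 1 := by rw [hd, Algebra.algebraMap_eq_smul_one, add_sub_cancel_right]
    rw [hb, mul_sub, sub_mul, CFC.conjugate_rpow_neg_one_half d, mul_smul_comm, smul_mul_assoc,
      mul_one]
  have hdiff : a - h * w * b * star (h * w) = ε • (h * w * star (h * w)) := by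
    calc a - h * w * b * star (h * w)
        = a - h * (w * b * w) * h := by simp only [star_mul, hw, hh, mul_assoc]
      _ = ε • (h * (w * w) * h) := by
        rw [hwbw, mul_sub, sub_mul, mul_one, CFC.sqrt_mul_sqrt_self a, sub_sub_cancel,
          mul_smul_comm, smul_mul_assoc]
      _ = ε • (h * w * star (h * w)) := by simp only [star_mul, hw, hh, mul_assoc]
  refine ⟨h * w, ?_⟩
  rw [hdiff, norm_smul, Real.norm_of_nonneg hε.le, CStarRing.norm_self_mul_star]
  exact mul_le_of_le_one_right hε.le (mul_le_one₀ hv (norm_nonneg _) hv)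

theorem cuntzLE_pow_three (ha : 0 ≤ a) : CuntzLE a (a ^ 3) := by
  refine cuntzLE_of_forall_pos_exists_norm_sub_le fun ε hε ↦ ?_
  have hspec : ∀ x ∈ spectrum ℝ a, 0 ≤ x := fun x hx ↦ spectrum_nonneg_of_nonneg ha hx
  set g : ℝ → ℝ := fun x ↦ (x + ε / 2)⁻¹ with hg
  have hg_cont : ContinuousOn g (spectrum ℝ a) :=
    ContinuousOn.inv₀ (by fun_prop) fun x hx ↦ by linarith [hspec x hx]
  have hg_star : star (cfc g a) = cfc g a := IsSelfAdjoint.cfc.star_eq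
  have hdiff : a - cfc g a * a ^ 3 * star (cfc g a) = cfc (fun x ↦ x - g x * x ^ 3 * g x) a := by
    rw [hg_star, cfc_sub .., cfc_mul .., cfc_mul .., cfc_pow_id .., cfc_id' ℝ a]
  refine ⟨cfc g a, ?_⟩
  rw [hdiff]
  refine norm_cfc_le hε.le fun x hx ↦ ?_
  have hx : 0 ≤ x := hspec x hx
  have hfrac : x - g x * x ^ 3 * g x = x * (x * ε + ε ^ 2 / 4) / (x + ε / 2) ^ 2 := by
    simp only [hg]
    field_simp
    ring
  rw [hfrac, Real.norm_of_nonneg (by positivity), div_le_iff₀ (by positivity)]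
  nlinarith [mul_nonneg hx (sq_nonneg ε), pow_pos hε 3]

theorem cuntzLE_posPart_of_le (ha : IsSelfAdjoint a) (hab : a ≤ b) : CuntzLE a⁺ b := by
  have hp : 0 ≤ a⁺ := CFC.posPart_nonneg a
  have hcube : a⁺ * a * a⁺ = a⁺ ^ 3 := by
    nth_rw 2 [← CFC.posPart_sub_negPart a]
    rw [mul_sub, CFC.posPart_mul_negPart, sub_zero, pow_three']
  have hconj : a⁺ ^ 3 ≤ a⁺ * b * star a⁺ := by
    rw [(IsSelfAdjoint.of_nonneg hp).star_eq, ← hcube]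
    exact conjugate_le_conjugate_of_nonneg hab hp
  have hle : CuntzLE (a⁺ ^ 3) (a⁺ * b * star a⁺) :=
    cuntzLE_of_le (by rw [pow_three']; exact conjugate_nonneg_of_nonneg hp hp) hconj
  exact (cuntzLE_pow_three hp).trans (hle.trans (cuntzLE_conj a⁺ b))

end CuntzLE

section Cut

variable {A : Type*} [CStarAlgebra A] {a b : A}

theorem cut_eq_posPart (s : ℝ) (ha : IsSelfAdjoint a) : cut s a = (a - algebraMap ℝ A s)⁺ := by
  have hsub : a - algebraMap ℝ A s = cfc (fun x : ℝ ↦ x - s) a := by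
    rw [cfc_sub .., cfc_id' ℝ a, cfc_const s a]
  rw [CFC.posPart_def, cfcₙ_eq_cfc, hsub, ← cfc_comp' ..]
  rfl

theorem cuntzLE_cut_add_of_norm_sub_conj_le {v : A} (hv : v * star v = 1)
    (ha : IsSelfAdjoint a) (hb : IsSelfAdjoint b) {r : ℝ} (t : ℝ) (hr : ‖a - v * b * star v‖ ≤ r) :
    CuntzLE (cut (t + r) a) (cut t b) := by
  let _ := CStarAlgebra.spectralOrder A
  have := CStarAlgebra.spectralOrderedRing A
  rw [cut_eq_posPart _ ha, cut_eq_posPart _ hb]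
  have hr' : a - v * b * star v ≤ algebraMap ℝ A r :=
    (ha.sub (hb.conjugate v)).le_algebraMap_norm_self.trans (algebraMap_mono A hr)
  have hvt : v * algebraMap ℝ A t * star v = algebraMap ℝ A t := by
    rw [← Algebra.commutes, mul_assoc, hv, mul_one]
  have hle : a - algebraMap ℝ A (t + r) ≤ v * (b - algebraMap ℝ A t)⁺ * star v :=
    calc a - algebraMap ℝ A (t + r)
        = a - algebraMap ℝ A r - algebraMap ℝ A t := by rw [map_add]; abel
      _ ≤ v * b * star v - algebraMap ℝ A t := by gcongr; exact sub_le_comm.1 hr'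
      _ = v * (b - algebraMap ℝ A t) * star v := by rw [mul_sub, sub_mul, hvt]
      _ ≤ v * (b - algebraMap ℝ A t)⁺ * star v :=
        star_right_conjugate_le_conjugate
          (CFC.le_posPart (hb.sub (IsSelfAdjoint.algebraMap A (.all t)))) v
  exact (cuntzLE_posPart_of_le (ha.sub (.algebraMap A (.all _))) hle).trans (cuntzLE_conj _ _)

end Cut

section Distances

theorem norm_sub_star_conj_of_mem_unitary {A : Type*} [NormedRing A] [StarRing A] [CStarRing A]
    {u : A} (hu : u ∈ unitary A) (a b : A) : ‖a - star u * b * u‖ = ‖u * a * star u - b‖ := by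
  have hconj : u * (a - star u * b * u) * star u = u * a * star u - b := by
    calc u * (a - star u * b * u) * star u
        = u * a * star u - (u * star u) * b * (u * star u) := by noncomm_ring
      _ = u * a * star u - b := by rw [Unitary.mul_star_self_of_mem hu, one_mul, mul_one]
  rw [← hconj, CStarRing.norm_mul_mem_unitary _ (Unitary.star_mem hu),
    CStarRing.norm_mem_unitary_mul _ hu]

variable {A : Type*} [CStarAlgebra A] {a b u : A}

theorem dW_le_norm_conj_sub (ha : IsSelfAdjoint a) (hb : IsSelfAdjoint b) (hu : u ∈ unitary A) :
    dW a b ≤ ‖u * a * star u - b‖ := by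
  refine le_of_forall_pos_le_add fun ε hε ↦ csInf_le ⟨0, fun r hr ↦ hr.1.le⟩ ?_
  have hle : ‖u * a * star u - b‖ ≤ ‖u * a * star u - b‖ + ε := le_add_of_nonneg_right hε.le
  refine ⟨by positivity, fun t _ ↦ ⟨?_, ?_⟩⟩
  · have hu' : star u * star (star u) = 1 := by rw [star_star, Unitary.star_mul_self_of_mem hu]
    refine cuntzLE_cut_add_of_norm_sub_conj_le hu' ha hb t ?_
    rwa [star_star, norm_sub_star_conj_of_mem_unitary hu]
  · refine cuntzLE_cut_add_of_norm_sub_conj_le (Unitary.mul_star_self_of_mem hu) hb ha t ?_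
    rwa [norm_sub_rev]

theorem dW_le_dU (ha : IsSelfAdjoint a) (hb : IsSelfAdjoint b) : dW a b ≤ dU a b := by
  refine le_csInf ⟨_, 1, one_mem _, rfl⟩ ?_
  rintro _ ⟨u, hu, rfl⟩
  exact dW_le_norm_conj_sub ha hb hu

theorem dU_le_norm_sub (a b : A) : dU a b ≤ ‖a - b‖ := by
  refine csInf_le ⟨0, ?_⟩ ⟨1, one_mem _, by simp⟩
  rintro _ ⟨u, -, rfl⟩
  exact norm_nonneg _

theorem dW_le_dU_le_norm_sub_general (ha : IsSelfAdjoint a) (hb : IsSelfAdjoint b) :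
    dW a b ≤ dU a b ∧ dU a b ≤ ‖a - b‖ :=
  ⟨dW_le_dU ha hb, dU_le_norm_sub a b⟩

end Distances

/-- `d_W(a,b) ≤ d_U(a,b) ≤ ‖a - b‖` for positive elements of a unital C*-algebra. -/
theorem dW_le_dU_le_norm_sub {A : Type*} [CStarAlgebra A] [PartialOrder A] [StarOrderedRing A]
    (a b : A) (ha : 0 ≤ a) (hb : 0 ≤ b) :
    dW a b ≤ dU a b ∧ dU a b ≤ ‖a - b‖ :=
  dW_le_dU_le_norm_sub_general (.of_nonneg ha) (.of_nonneg hb)
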